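/- There exists a constant C > 0 with the following property: for every continuous map u : O → ℝ³ which is piecewise affine with respect to the triangulation T⁽¹⁾ of O (determined by cutting O along the diagonal P₁P₄), such that det Du > 0 almost everywhere in O and u(O) is convex, one has dist²(Du, SO(3)) ≤ C · Σ_{PᵢPⱼ edge of O} (|u(Pᵢ) − u(Pⱼ)| − 1)² almost everywhere in O, where the sum runs over the 12 edges of O. -/

import Mathlib

/- STATEMENT 2 (Lemma `lemma:ottaedro`): there is `C > 0` such that for every
continuous map `u : O → ℝ³` which is piecewise affine with respect to the
triangulation `T⁽¹⁾` of the octahedron `O` (cut along the diagonal `P₁P₄`),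
with `det Du > 0` a.e. in `O` and `u(O)` convex, one has
`dist²(Du, SO(3)) ≤ C ∑_{PᵢPⱼ edge} (|u(Pᵢ) − u(Pⱼ)| − 1)²` a.e. in `O`.

Such a map is determined by its values `u : Fin 6 → ℝ³` at the vertices
`P₁,…,P₆` of `O`; on each tetrahedron `t` of `T⁽¹⁾` its gradient is the
constant matrix `gradMat u t`, its image of `O` is `octImage u`, and the
almost-everywhere statements amount to statements for each of the four
tetrahedra of `T⁽¹⁾`. -/

noncomputable section

open scoped BigOperators

/-- SO(3) as a set of 3×3 real matrices. -/
def SO3 : Set (Matrix (Fin 3) (Fin 3) ℝ) :=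
  {R | R.transpose * R = 1 ∧ R.det = 1}

/-- Square of the Frobenius norm of a 3×3 matrix. -/
def frobSq (F : Matrix (Fin 3) (Fin 3) ℝ) : ℝ :=
  ∑ i : Fin 3, ∑ j : Fin 3, (F i j) ^ 2

/-- Square of the (Frobenius) distance of `F` from `SO(3)`. -/
def distSqSO3 (F : Matrix (Fin 3) (Fin 3) ℝ) : ℝ :=
  sInf {s : ℝ | ∃ R ∈ SO3, s = frobSq (F - R)}

/-- Euclidean norm on ℝ³. -/
def enorm3 (v : Fin 3 → ℝ) : ℝ :=
  Real.sqrt (∑ i : Fin 3, (v i) ^ 2)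

/-- The vertices of the octahedron `O`. -/
def octP : Fin 6 → (Fin 3 → ℝ) :=
  ![![0, 0, 0], ![1, 0, 0], ![0, 1, 0], ![1, 1, 0],
    ![1/2, 1/2, Real.sqrt 2 / 2], ![1/2, 1/2, -(Real.sqrt 2 / 2)]]

/-- Triangulation `T⁽¹⁾` (cut along the diagonal `P₁P₄`). -/
def tets1 : List (Fin 6 × Fin 6 × Fin 6 × Fin 6) :=
  [(0, 1, 3, 4), (0, 1, 3, 5), (0, 2, 3, 4), (0, 2, 3, 5)]

/-- The 12 edges of the octahedron `O`: all pairs of distinct vertices except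
the three diagonal pairs `{1,4}`, `{2,3}`, `{5,6}` (in `Fin 6` indexing:
`{0,3}`, `{1,2}`, `{4,5}`). -/
def octEdges : List (Fin 6 × Fin 6) :=
  [(0, 1), (0, 2), (0, 4), (0, 5), (1, 3), (1, 4), (1, 5),
   (2, 3), (2, 4), (2, 5), (3, 4), (3, 5)]

/-- The 3×3 matrix whose columns are the edge vectors of the tetrahedron with
vertices `q t.1, q t.2.1, q t.2.2.1, q t.2.2.2` emanating from the first vertex. -/
def colMat (q : Fin 6 → Fin 3 → ℝ) (t : Fin 6 × Fin 6 × Fin 6 × Fin 6) :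
    Matrix (Fin 3) (Fin 3) ℝ :=
  Matrix.of fun i j =>
    (![q t.2.1 - q t.1, q t.2.2.1 - q t.1, q t.2.2.2 - q t.1] j) i

/-- The constant gradient `Du` of the piecewise affine map on the tetrahedron `t`. -/
def gradMat (u : Fin 6 → Fin 3 → ℝ) (t : Fin 6 × Fin 6 × Fin 6 × Fin 6) :
    Matrix (Fin 3) (Fin 3) ℝ :=
  colMat u t * (colMat octP t)⁻¹

/-- Determinant of the gradient on the tetrahedron `t`. -/
def detGrad (u : Fin 6 → Fin 3 → ℝ) (t : Fin 6 × Fin 6 × Fin 6 × Fin 6) : ℝ :=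
  (colMat u t).det / (colMat octP t).det

/-- The image `u⁽¹⁾(O)` of the octahedron under the piecewise affine extension
of `u` with respect to `T⁽¹⁾`. -/
def octImage (u : Fin 6 → Fin 3 → ℝ) : Set (Fin 3 → ℝ) :=
  ⋃ t ∈ tets1, convexHull ℝ ({u t.1, u t.2.1, u t.2.2.1, u t.2.2.2} : Set (Fin 3 → ℝ))

def vip (v w : Fin 3 → ℝ) : ℝ := v 0 * w 0 + v 1 * w 1 + v 2 * w 2
def det3 (x y z : Fin 3 → ℝ) : ℝ :=
  x 0 * (y 1 * z 2 - y 2 * z 1) - x 1 * (y 0 * z 2 - y 2 * z 0) + x 2 * (y 0 * z 1 - y 1 * z 0)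

lemma pq_real {p q s t η : ℝ} (hη : 0 ≤ η) (hη' : η ≤ 1/100) (hs : 0 ≤ s) (ht : 0 ≤ t)
    (hst : 0 < s + t) (hp : p ≤ 2) (hq : q ≤ 2)
    (h1 : s * (p - 2*η) ≤ t * (1 + 3*η)) (h2 : t * (1 - 3*η) ≤ s * (p + 2*η))
    (h3 : t * (q - 2*η) ≤ s * (1 + 3*η)) (h4 : s * (1 - 3*η) ≤ t * (q + 2*η)) :
    3/10 ≤ p ∧ 3/10 ≤ q ∧ p * q ≤ 1 + 15 * η := by
  have a1 : t * (97/100) ≤ s * (202/100) := by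
    have : s * (p + 2*η) ≤ s * (202/100) := mul_le_mul_of_nonneg_left (by linarith) hs
    have : t * (97/100) ≤ t * (1 - 3*η) := mul_le_mul_of_nonneg_left (by linarith) ht
    linarith
  have a2 : s * (97/100) ≤ t * (202/100) := by
    have : t * (q + 2*η) ≤ t * (202/100) := mul_le_mul_of_nonneg_left (by linarith) ht
    have : s * (97/100) ≤ s * (1 - 3*η) := mul_le_mul_of_nonneg_left (by linarith) hs
    linarith
  have s0 : 0 < s := by linarith
  have t0 : 0 < t := by linarith
  have p0 : 3/10 ≤ p := by
    by_contra h
    push Not at h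
    have : s * (p + 2*η) ≤ s * (32/100) := mul_le_mul_of_nonneg_left (by linarith) hs
    have : t * (97/100) ≤ t * (1 - 3*η) := mul_le_mul_of_nonneg_left (by linarith) ht
    linarith
  have q0 : 3/10 ≤ q := by
    by_contra h
    push Not at h
    have : t * (q + 2*η) ≤ t * (32/100) := mul_le_mul_of_nonneg_left (by linarith) ht
    have : s * (97/100) ≤ s * (1 - 3*η) := mul_le_mul_of_nonneg_left (by linarith) hs
    linarith
  refine ⟨p0, q0, ?_⟩
  have hm := mul_le_mul h1 h3 (mul_nonneg ht (by linarith)) (mul_nonneg ht (by linarith))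
  have hm2 : (s * t) * ((p - 2*η) * (q - 2*η)) ≤ (s * t) * ((1+3*η) * (1+3*η)) := by linarith
  have hm3 := le_of_mul_le_mul_left hm2 (mul_pos s0 t0)
  nlinarith [mul_nonneg hη (by linarith : (0:ℝ) ≤ 2 - p), mul_nonneg hη (by linarith : (0:ℝ) ≤ 2 - q),
    mul_nonneg hη (by linarith : (0:ℝ) ≤ 1/100 - η)]

lemma vip_self_nonneg (v : Fin 3 → ℝ) : 0 ≤ vip v v := by
  unfold vip; nlinarith [mul_self_nonneg (v 0), mul_self_nonneg (v 1), mul_self_nonneg (v 2)]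

lemma pq_bound (A D B C : Fin 3 → ℝ) {η α δ β γ : ℝ} (hη : 0 ≤ η) (hη' : η ≤ 1/100)
    (hα : 0 ≤ α) (hδ : 0 ≤ δ) (hβ : 0 ≤ β) (hγ : 0 ≤ γ) (hpos : 0 < α + δ + β + γ)
    (hr : ∀ i, α * A i + δ * D i = β * B i + γ * C i)
    (nA : |vip A A - 1| ≤ η) (nB : |vip B B - 1| ≤ η) (nC : |vip C C - 1| ≤ η)
    (nD : |vip D D - 1| ≤ η)
    (nAB : |vip (A-B) (A-B) - 1| ≤ η) (nAC : |vip (A-C) (A-C) - 1| ≤ η)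
    (nDB : |vip (D-B) (D-B) - 1| ≤ η) (nDC : |vip (D-C) (D-C) - 1| ≤ η) :
    3/10 ≤ 2 - vip (A-D) (A-D) / 2 ∧ 3/10 ≤ 2 - vip (B-C) (B-C) / 2 ∧
    (2 - vip (A-D) (A-D) / 2) * (2 - vip (B-C) (B-C) / 2) ≤ 1 + 15 * η := by
  have hx := vip_self_nonneg (A-D)
  have hy := vip_self_nonneg (B-C)
  have e1 : α * (3 * vip A A + vip D D - vip (A-D) (A-D))
      + δ * (3 * vip D D + vip A A - vip (A-D) (A-D)) =
      β * (vip A A + vip B B - vip (A-B) (A-B) + vip D D + vip B B - vip (D-B) (D-B))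
      + γ * (vip A A + vip C C - vip (A-C) (A-C) + vip D D + vip C C - vip (D-C) (D-C)) := by
    have h0 := hr 0
    have h1 := hr 1
    have h2 := hr 2
    simp only [vip, Pi.sub_apply]
    linear_combination 2 * (A 0 + D 0) * h0 + 2 * (A 1 + D 1) * h1 + 2 * (A 2 + D 2) * h2
  have e2 : β * (3 * vip B B + vip C C - vip (B-C) (B-C))
      + γ * (3 * vip C C + vip B B - vip (B-C) (B-C)) =
      α * (vip A A + vip B B - vip (A-B) (A-B) + vip A A + vip C C - vip (A-C) (A-C))
      + δ * (vip D D + vip B B - vip (D-B) (D-B) + vip D D + vip C C - vip (D-C) (D-C)) := by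
    have h0 := hr 0
    have h1 := hr 1
    have h2 := hr 2
    simp only [vip, Pi.sub_apply]
    linear_combination - 2 * (B 0 + C 0) * h0 - 2 * (B 1 + C 1) * h1 - 2 * (B 2 + C 2) * h2
  rw [abs_le] at *
  generalize vip (A-D) (A-D) = x at *
  generalize vip (B-C) (B-C) = y at *
  generalize vip A A = vA at *
  generalize vip B B = vB at *
  generalize vip C C = vC at *
  generalize vip D D = vD at *
  generalize vip (A-B) (A-B) = vAB at *
  generalize vip (A-C) (A-C) = vAC at *
  generalize vip (D-B) (D-B) = vDB at *
  generalize vip (D-C) (D-C) = vDC at *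
  obtain ⟨nA, nA'⟩ := nA
  obtain ⟨nB, nB'⟩ := nB
  obtain ⟨nC, nC'⟩ := nC
  obtain ⟨nD, nD'⟩ := nD
  obtain ⟨nAB, nAB'⟩ := nAB
  obtain ⟨nAC, nAC'⟩ := nAC
  obtain ⟨nDB, nDB'⟩ := nDB
  obtain ⟨nDC, nDC'⟩ := nDC
  have key : ∀ {k z w : ℝ}, 0 ≤ k → z ≤ w → k * z ≤ k * w :=
    fun hk h => mul_le_mul_of_nonneg_left h hk
  have a1 := key hα (by linarith : 4 - 4 * η - x ≤ 3 * vA + vD - x)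
  have a2 := key hα (by linarith : 3 * vA + vD - x ≤ 4 + 4 * η - x)
  have a3 := key hδ (by linarith : 4 - 4 * η - x ≤ 3 * vD + vA - x)
  have a4 := key hδ (by linarith : 3 * vD + vA - x ≤ 4 + 4 * η - x)
  have b1 := key hβ (by linarith : 4 - 4 * η - y ≤ 3 * vB + vC - y)
  have b2 := key hβ (by linarith : 3 * vB + vC - y ≤ 4 + 4 * η - y)
  have b3 := key hγ (by linarith : 4 - 4 * η - y ≤ 3 * vC + vB - y)
  have b4 := key hγ (by linarith : 3 * vC + vB - y ≤ 4 + 4 * η - y)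
  have c1 := key hβ (by linarith : 2 - 6 * η ≤ vA + vB - vAB + vD + vB - vDB)
  have c2 := key hβ (by linarith : vA + vB - vAB + vD + vB - vDB ≤ 2 + 6 * η)
  have c3 := key hγ (by linarith : 2 - 6 * η ≤ vA + vC - vAC + vD + vC - vDC)
  have c4 := key hγ (by linarith : vA + vC - vAC + vD + vC - vDC ≤ 2 + 6 * η)
  have d1 := key hα (by linarith : 2 - 6 * η ≤ vA + vB - vAB + vA + vC - vAC)
  have d2 := key hα (by linarith : vA + vB - vAB + vA + vC - vAC ≤ 2 + 6 * η)
  have d3 := key hδ (by linarith : 2 - 6 * η ≤ vD + vB - vDB + vD + vC - vDC)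
  have d4 := key hδ (by linarith : vD + vB - vDB + vD + vC - vDC ≤ 2 + 6 * η)
  refine pq_real (s := α + δ) (t := β + γ) hη hη' (by linarith) (by linarith) (by linarith)
    (by linarith) (by linarith) ?_ ?_ ?_ ?_
  · linarith
  · linarith
  · linarith
  · linarith

-- ring lower bound; vectors from the vertex `a`
lemma ring_lower (D B C E F : Fin 3 → ℝ) {η : ℝ} (hη : 0 ≤ η) (hη' : η ≤ 1/100)
    (o1 : 0 < det3 B D E) (o2 : det3 B D F < 0) (o3 : det3 C D E < 0) (o4 : 0 < det3 C D F)
    (nB : |vip B B - 1| ≤ η) (nC : |vip C C - 1| ≤ η)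
    (nE : |vip E E - 1| ≤ η) (nF : |vip F F - 1| ≤ η)
    (nDB : |vip (B-D) (B-D) - 1| ≤ η) (nDC : |vip (C-D) (C-D) - 1| ≤ η)
    (nDE : |vip (D-E) (D-E) - 1| ≤ η) (nDF : |vip (D-F) (D-F) - 1| ≤ η)
    (nBE : |vip (B-E) (B-E) - 1| ≤ η) (nBF : |vip (B-F) (B-F) - 1| ≤ η)
    (nCE : |vip (C-E) (C-E) - 1| ≤ η) (nCF : |vip (C-F) (C-F) - 1| ≤ η) :
    1 - 5 * η ≤ 2 - vip D D / 2 := by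
  by_contra hcon
  push Not at hcon
  set x := vip D D with hx
  have neg : ∀ V W : Fin 3 → ℝ, |vip V V - 1| ≤ η → |vip W W - 1| ≤ η →
      |vip (V-D) (V-D) - 1| ≤ η → |vip (W-D) (W-D) - 1| ≤ η → |vip (V-W) (V-W) - 1| ≤ η →
      x * vip V W - vip V D * vip W D < 0 := by
    intro V W h1 h2 h3 h4 h5
    rw [abs_le] at *
    have e1 : vip V D = (vip V V + x - vip (V-D) (V-D)) / 2 := by
      rw [hx]; simp only [vip, Pi.sub_apply]; ring
    have e2 : vip W D = (vip W W + x - vip (W-D) (W-D)) / 2 := by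
      rw [hx]; simp only [vip, Pi.sub_apply]; ring
    have e3 : vip V W = (vip V V + vip W W - vip (V-W) (V-W)) / 2 := by
      simp only [vip, Pi.sub_apply]; ring
    have f1 : x / 2 - η ≤ vip V D := by linarith
    have f2 : x / 2 - η ≤ vip W D := by linarith
    have f3 : vip V W ≤ 1/2 + 3/2 * η := by linarith
    have g1 := mul_le_mul f1 f2 (by linarith) (by linarith)
    have g2 := mul_le_mul_of_nonneg_left f3 (by linarith : 0 ≤ x)
    have g3 := mul_pos (by linarith : 0 < x) (by linarith : 0 < x / 4 - 1/2 - 5/2 * η)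
    nlinarith [mul_nonneg hη hη]
  have sw : ∀ V W : Fin 3 → ℝ, vip (V - W) (V - W) = vip (W - V) (W - V) := by
    intro V W; simp only [vip, Pi.sub_apply]; ring
  rw [sw] at nDE nDF
  have r1 := neg B E nB nE nDB nDE nBE
  have r2 := neg B F nB nF nDB nDF nBF
  have r3 := neg C E nC nE nDC nDE nCE
  have r4 := neg C F nC nF nDC nDF nCF
  have cs : ∀ V : Fin 3 → ℝ, 0 ≤ x * vip V V - vip V D * vip V D := by
    intro V
    have : x * vip V V - vip V D * vip V D = (V 0 * D 1 - V 1 * D 0)^2 + (V 0 * D 2 - V 2 * D 0)^2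
      + (V 1 * D 2 - V 2 * D 1)^2 := by rw [hx]; simp only [vip]; ring
    rw [this]; positivity
  have i1 : det3 C D E * (x * vip B E - vip B D * vip E D) - det3 B D E * (x * vip C E - vip C D * vip E D)
      = (det3 C D B) * (x * vip E E - vip E D * vip E D) := by
    rw [hx]; simp only [vip, det3]; ring
  have i2 : det3 C D F * (x * vip B F - vip B D * vip F D) - det3 B D F * (x * vip C F - vip C D * vip F D)
      = (det3 C D B) * (x * vip F F - vip F D * vip F D) := by
    rw [hx]; simp only [vip, det3]; ring
  have j1 := mul_pos_of_neg_of_neg o3 r1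
  have j2 := mul_neg_of_pos_of_neg o1 r3
  have j3 := mul_neg_of_pos_of_neg o4 r2
  have j4 := mul_pos_of_neg_of_neg o2 r4
  have k1 : 0 < det3 C D B := by
    by_contra h
    push Not at h
    have := mul_nonpos_of_nonpos_of_nonneg h (cs E)
    linarith
  have := mul_nonneg k1.le (cs F)
  linarith

-- Cauchy-Schwarz step
lemma qr_lower (B C E F : Fin 3 → ℝ) {η : ℝ} (hη : 0 ≤ η) (hη' : η ≤ 1/100)
    (nB : |vip B B - 1| ≤ η) (nC : |vip C C - 1| ≤ η)
    (nE : |vip E E - 1| ≤ η) (nF : |vip F F - 1| ≤ η)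
    (nBE : |vip (B-E) (B-E) - 1| ≤ η) (nBF : |vip (B-F) (B-F) - 1| ≤ η)
    (nCE : |vip (C-E) (C-E) - 1| ≤ η) (nCF : |vip (C-F) (C-F) - 1| ≤ η) :
    1 - 15 * η ≤ (2 - vip (B-C) (B-C) / 2) * (2 - vip (E-F) (E-F) / 2) := by
  have cs : vip (B+C) (E+F) * vip (B+C) (E+F) ≤ vip (B+C) (B+C) * vip (E+F) (E+F) := by
    generalize B + C = V
    generalize E + F = W
    have : vip V V * vip W W - vip V W * vip V W = (V 0 * W 1 - V 1 * W 0)^2 + (V 0 * W 2 - V 2 * W 0)^2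
      + (V 1 * W 2 - V 2 * W 1)^2 := by simp only [vip]; ring
    have h : 0 ≤ vip V V * vip W W - vip V W * vip V W := by rw [this]; positivity
    linarith
  have n1 := vip_self_nonneg (B+C)
  have n2 := vip_self_nonneg (E+F)
  have hy := vip_self_nonneg (B-C)
  have hz := vip_self_nonneg (E-F)
  have e1 : vip (B+C) (B+C) = 2 * (vip B B + vip C C) - vip (B-C) (B-C) := by
    simp only [vip, Pi.sub_apply, Pi.add_apply]; ring
  have e2 : vip (E+F) (E+F) = 2 * (vip E E + vip F F) - vip (E-F) (E-F) := by
    simp only [vip, Pi.sub_apply, Pi.add_apply]; ring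
  have e3 : vip (B+C) (E+F) = vip B B + vip C C + vip E E + vip F F
     - (vip (B-E) (B-E) + vip (B-F) (B-F) + vip (C-E) (C-E) + vip (C-F) (C-F)) / 2 := by
    simp only [vip, Pi.sub_apply, Pi.add_apply]; ring
  rw [abs_le] at *
  generalize vip (B-C) (B-C) = y at *
  generalize vip (E-F) (E-F) = z at *
  have f1 : vip (B+C) (B+C) ≤ 2 * (2 - y / 2) + 4 * η := by linarith
  have f2 : vip (E+F) (E+F) ≤ 2 * (2 - z / 2) + 4 * η := by linarith
  have f3 : 2 - 6 * η ≤ vip (B+C) (E+F) := by linarith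
  have g1 := mul_le_mul f3 f3 (by linarith) (by linarith)
  have g2 := mul_le_mul f1 f2 n2 (by linarith)
  nlinarith [mul_nonneg hη hy, mul_nonneg hη hz, mul_nonneg hη (by linarith : (0:ℝ) ≤ 1/100 - η)]

lemma p_upper {p q r η : ℝ} (hη : 0 ≤ η) (hη' : η ≤ 1/100) (hp : 3/10 ≤ p) (hp2 : p ≤ 2)
    (hq : 3/10 ≤ q) (hr : 3/10 ≤ r) (h1 : p * q ≤ 1 + 15 * η) (h2 : p * r ≤ 1 + 15 * η)
    (h3 : 1 - 15 * η ≤ q * r) : p ≤ 1 + 93 * η := by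
  have g1 := mul_le_mul h1 h2 (by positivity) (by linarith)
  have g2 := mul_le_mul_of_nonneg_left h3 (by positivity : 0 ≤ p * p)
  have g3 : η * (p * p) ≤ η * 4 := mul_le_mul_of_nonneg_left (by nlinarith) hη
  by_contra h
  push Not at h
  nlinarith [mul_nonneg hη (by linarith : (0:ℝ) ≤ 1/100 - η)]

def InT (p q r s x : Fin 3 → ℝ) : Prop :=
  ∃ k l m n : ℝ, 0 ≤ k ∧ 0 ≤ l ∧ 0 ≤ m ∧ 0 ≤ n ∧ k + l + m + n = 1 ∧
    ∀ i, x i = k * p i + l * q i + m * r i + n * s i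

lemma inT_of_hull {p q r s x : Fin 3 → ℝ} (hx : x ∈ convexHull ℝ ({p, q, r, s} : Set (Fin 3 → ℝ))) :
    InT p q r s x := by
  have hsub : convexHull ℝ ({p, q, r, s} : Set (Fin 3 → ℝ)) ⊆ {x | InT p q r s x} := by
    apply convexHull_min
    · intro y hy
      simp only [Set.mem_insert_iff, Set.mem_singleton_iff] at hy
      rcases hy with rfl | rfl | rfl | rfl
      · exact ⟨1, 0, 0, 0, by norm_num, by norm_num, by norm_num, by norm_num, by norm_num, fun i => by ring⟩
      · exact ⟨0, 1, 0, 0, by norm_num, by norm_num, by norm_num, by norm_num, by norm_num, fun i => by ring⟩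
      · exact ⟨0, 0, 1, 0, by norm_num, by norm_num, by norm_num, by norm_num, by norm_num, fun i => by ring⟩
      · exact ⟨0, 0, 0, 1, by norm_num, by norm_num, by norm_num, by norm_num, by norm_num, fun i => by ring⟩
    · rintro y ⟨k, l, m, n, hk, hl, hm, hn, h1, hy⟩ z ⟨k', l', m', n', hk', hl', hm', hn', h1', hz⟩
        v w hv hw hvw
      refine ⟨v * k + w * k', v * l + w * l', v * m + w * m', v * n + w * n', by positivity,
        by positivity, by positivity, by positivity, ?_, fun i => ?_⟩
      · linear_combination v * h1 + w * h1' + hvw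
      · simp only [Pi.add_apply, Pi.smul_apply, smul_eq_mul, hy i, hz i]; ring
  exact hsub hx

lemma small_t {g g' : ℝ} (hg : 0 < g) : ∃ ε > 0, ε ≤ 1 ∧ ∀ t, 0 ≤ t → t ≤ ε → 0 < g + t * g' := by
  refine ⟨g / (g + |g'|) / 2, by positivity, ?_, ?_⟩
  · have : g / (g + |g'|) ≤ 1 := div_le_one_of_le₀ (by linarith [abs_nonneg g']) (by positivity)
    linarith
  · intro t h0 h1
    have h2 : -(t * |g'|) ≤ t * g' := by
      have := mul_le_mul_of_nonneg_left (neg_abs_le g') h0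
      linarith
    have h3 : t * (g + |g'|) ≤ g / 2 := by
      have := mul_le_mul_of_nonneg_right h1 (by positivity : 0 ≤ g + |g'|)
      have e : g / (g + |g'|) / 2 * (g + |g'|) = g / 2 := by field_simp
      linarith
    have h4 : 0 ≤ t * g := by positivity
    linarith

lemma crossing {a b c d e f : Fin 3 → ℝ} {K : Set (Fin 3 → ℝ)} (hK : Convex ℝ K)
    (hb : b ∈ K) (hc : c ∈ K) (he : e ∈ K)
    (hcov : ∀ x ∈ K, InT a b d e x ∨ InT a b d f x ∨ InT a c d e x ∨ InT a c d f x)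
    (o1 : 0 < det3 (b - a) (d - a) (e - a)) (o2 : det3 (b - a) (d - a) (f - a) < 0)
    (o3 : det3 (c - a) (d - a) (e - a) < 0) (o4 : 0 < det3 (c - a) (d - a) (f - a)) :
    ∃ α δ β γ : ℝ, 0 ≤ α ∧ 0 ≤ δ ∧ 0 ≤ β ∧ 0 ≤ γ ∧ 0 < α + δ + β + γ ∧
      ∀ i, α * (a - e) i + δ * (d - e) i = β * (b - e) i + γ * (c - e) i := by
  obtain ⟨ε1, p1, q1, h1⟩ := small_t (g' := det3 (b - a) (d - a) ((1/2 : ℝ) • b + (1/2 : ℝ) • c - e)) o1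
  obtain ⟨ε2, p2, q2, h2⟩ := small_t (g' := -det3 (c - a) (d - a) ((1/2 : ℝ) • b + (1/2 : ℝ) • c - e))
    (neg_pos.2 o3)
  set t := min ε1 ε2 with ht
  have t0 : 0 < t := lt_min p1 p2
  have t1 : t ≤ 1 := (min_le_left _ _).trans q1
  have h1 := h1 t t0.le (min_le_left _ _)
  have h2 := h2 t t0.le (min_le_right _ _)
  have hm : (1/2 : ℝ) • b + (1/2 : ℝ) • c ∈ K := hK hb hc (by norm_num) (by norm_num) (by norm_num)
  have hx := hK he hm (by linarith : 0 ≤ 1 - t) t0.le (by ring)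
  rcases hcov _ hx with ⟨k, l, m, n, hk, hl, hmm, hn, hs, H⟩ | ⟨k, l, m, n, hk, hl, hmm, hn, hs, H⟩ |
    ⟨k, l, m, n, hk, hl, hmm, hn, hs, H⟩ | ⟨k, l, m, n, hk, hl, hmm, hn, hs, H⟩
  · simp only [Pi.add_apply, Pi.smul_apply, smul_eq_mul] at H
    have hle : l ≤ t / 2 := by
      by_contra hc'
      push Not at hc'
      have i : (l - t/2) * det3 (b - a) (d - a) (e - a) = t / 2 * det3 (c - a) (d - a) (e - a) := by
        have H0 := H 0
        have H1 := H 1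
        have H2 := H 2
        obtain rfl : k = 1 - l - m - n := by linarith
        simp only [det3, Pi.sub_apply]
        linear_combination
          (-((d 1 - a 1) * (e 2 - a 2) - (d 2 - a 2) * (e 1 - a 1))) * H0
          + ((d 0 - a 0) * (e 2 - a 2) - (d 2 - a 2) * (e 0 - a 0)) * H1
          - ((d 0 - a 0) * (e 1 - a 1) - (d 1 - a 1) * (e 0 - a 0)) * H2
      have j1 := mul_pos (sub_pos.2 hc') o1
      have j2 := mul_neg_of_pos_of_neg (half_pos t0) o3
      linarith
    refine ⟨k, m, t/2 - l, t/2, hk, hmm, by linarith, by linarith, by linarith, fun i => ?_⟩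
    have := H i
    simp only [Pi.sub_apply]
    linear_combination -this - e i * hs
  · exfalso
    simp only [Pi.add_apply, Pi.smul_apply, smul_eq_mul] at H
    have i : det3 (b - a) (d - a) (e - a) + t * det3 (b - a) (d - a) ((1/2 : ℝ) • b + (1/2 : ℝ) • c - e)
        = n * det3 (b - a) (d - a) (f - a) := by
      have H0 := H 0
      have H1 := H 1
      have H2 := H 2
      obtain rfl : k = 1 - l - m - n := by linarith
      simp only [det3, Pi.sub_apply, Pi.add_apply, Pi.smul_apply, smul_eq_mul]
      linear_combination
          ((b 1 - a 1) * (d 2 - a 2) - (b 2 - a 2) * (d 1 - a 1)) * H0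
          - ((b 0 - a 0) * (d 2 - a 2) - (b 2 - a 2) * (d 0 - a 0)) * H1
          + ((b 0 - a 0) * (d 1 - a 1) - (b 1 - a 1) * (d 0 - a 0)) * H2
    have := mul_nonpos_of_nonneg_of_nonpos hn o2.le
    linarith
  · simp only [Pi.add_apply, Pi.smul_apply, smul_eq_mul] at H
    have hle : l ≤ t / 2 := by
      by_contra hc'
      push Not at hc'
      have i : (l - t/2) * det3 (c - a) (d - a) (e - a) = t / 2 * det3 (b - a) (d - a) (e - a) := by
        have H0 := H 0
        have H1 := H 1
        have H2 := H 2
        obtain rfl : k = 1 - l - m - n := by linarith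
        simp only [det3, Pi.sub_apply]
        linear_combination
          (-((d 1 - a 1) * (e 2 - a 2) - (d 2 - a 2) * (e 1 - a 1))) * H0
          + ((d 0 - a 0) * (e 2 - a 2) - (d 2 - a 2) * (e 0 - a 0)) * H1
          - ((d 0 - a 0) * (e 1 - a 1) - (d 1 - a 1) * (e 0 - a 0)) * H2
      have j1 := mul_neg_of_pos_of_neg (sub_pos.2 hc') o3
      have j2 := mul_pos (half_pos t0) o1
      linarith
    refine ⟨k, m, t/2, t/2 - l, hk, hmm, by linarith, by linarith, by linarith, fun i => ?_⟩
    have := H i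
    simp only [Pi.sub_apply]
    linear_combination -this - e i * hs
  · exfalso
    simp only [Pi.add_apply, Pi.smul_apply, smul_eq_mul] at H
    have i : det3 (c - a) (d - a) (e - a) + t * det3 (c - a) (d - a) ((1/2 : ℝ) • b + (1/2 : ℝ) • c - e)
        = n * det3 (c - a) (d - a) (f - a) := by
      have H0 := H 0
      have H1 := H 1
      have H2 := H 2
      obtain rfl : k = 1 - l - m - n := by linarith
      simp only [det3, Pi.sub_apply, Pi.add_apply, Pi.smul_apply, smul_eq_mul]
      linear_combination
          ((c 1 - a 1) * (d 2 - a 2) - (c 2 - a 2) * (d 1 - a 1)) * H0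
          - ((c 0 - a 0) * (d 2 - a 2) - (c 2 - a 2) * (d 0 - a 0)) * H1
          + ((c 0 - a 0) * (d 1 - a 1) - (c 1 - a 1) * (d 0 - a 0)) * H2
    have := mul_nonneg hn o4.le
    linarith

lemma frobSq_eq_trace (X : Matrix (Fin 3) (Fin 3) ℝ) : frobSq X = (X.transpose * X).trace := by
  simp only [frobSq, Matrix.trace, Matrix.diag, Matrix.mul_apply, Matrix.transpose_apply, Fin.sum_univ_three]
  ring

lemma frobSq_mul_left {R : Matrix (Fin 3) (Fin 3) ℝ} (hR : R.transpose * R = 1)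
    (X : Matrix (Fin 3) (Fin 3) ℝ) : frobSq (R * X) = frobSq X := by
  rw [frobSq_eq_trace, frobSq_eq_trace, Matrix.transpose_mul, Matrix.mul_assoc,
    ← Matrix.mul_assoc R.transpose, hR, Matrix.one_mul]

lemma frobSq_transpose (X : Matrix (Fin 3) (Fin 3) ℝ) : frobSq X.transpose = frobSq X := by
  simp only [frobSq, Matrix.transpose_apply, Fin.sum_univ_three]
  ring

lemma frobSq_conj {Q : Matrix (Fin 3) (Fin 3) ℝ} (hQ : Q.transpose * Q = 1) (l : Fin 3 → ℝ) :
    frobSq (Q * Matrix.diagonal l * Q.transpose) = ∑ i, l i ^ 2 := by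
  rw [Matrix.mul_assoc, frobSq_mul_left hQ, ← frobSq_transpose, Matrix.transpose_mul,
    Matrix.transpose_transpose, frobSq_mul_left hQ]
  simp [frobSq, Fin.sum_univ_three, Matrix.diagonal]

lemma distSq_le {F R : Matrix (Fin 3) (Fin 3) ℝ} (hR : R ∈ SO3) : distSqSO3 F ≤ frobSq (F - R) := by
  apply csInf_le
  · refine ⟨0, ?_⟩
    rintro s ⟨R, -, rfl⟩
    unfold frobSq
    positivity
  · exact ⟨R, hR, rfl⟩

lemma spectral3 {F : Matrix (Fin 3) (Fin 3) ℝ} (hF : 0 < F.det) :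
    ∃ (Q : Matrix (Fin 3) (Fin 3) ℝ) (l : Fin 3 → ℝ), Q.transpose * Q = 1 ∧ Q * Q.transpose = 1 ∧
      (∀ i, 0 < l i) ∧ F.transpose * F = Q * Matrix.diagonal l * Q.transpose := by
  have hinj : Function.Injective F.mulVec :=
    Matrix.mulVec_injective_of_isUnit ((Matrix.isUnit_iff_isUnit_det F).2 (isUnit_iff_ne_zero.2 hF.ne'))
  have hpd := Matrix.PosDef.conjTranspose_mul_self F hinj
  have hH := hpd.isHermitian
  refine ⟨hH.eigenvectorUnitary, hH.eigenvalues, ?_, ?_, fun i => hpd.eigenvalues_pos i, ?_⟩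
  · have := Unitary.coe_star_mul_self hH.eigenvectorUnitary
    simpa [Matrix.star_eq_conjTranspose] using this
  · have := Unitary.coe_mul_star_self hH.eigenvectorUnitary
    simpa [Matrix.star_eq_conjTranspose] using this
  · have := hH.spectral_theorem
    rw [Unitary.conjStarAlgAut_apply] at this
    simpa [Matrix.star_eq_conjTranspose] using this

lemma conj_diag_mul {Q : Matrix (Fin 3) (Fin 3) ℝ} (hQ : Q.transpose * Q = 1) (l m : Fin 3 → ℝ) :
    (Q * Matrix.diagonal l * Q.transpose) * (Q * Matrix.diagonal m * Q.transpose) =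
      Q * Matrix.diagonal (fun i => l i * m i) * Q.transpose := by
  rw [← Matrix.diagonal_mul_diagonal]
  simp only [Matrix.mul_assoc]
  rw [← Matrix.mul_assoc Q.transpose, hQ, Matrix.one_mul]

lemma conj_diag_sub_one {Q : Matrix (Fin 3) (Fin 3) ℝ} (hQ : Q * Q.transpose = 1) (l : Fin 3 → ℝ) :
    (Q * Matrix.diagonal l * Q.transpose) - 1 =
      Q * Matrix.diagonal (fun i => l i - 1) * Q.transpose := by
  have : Matrix.diagonal (fun i => l i - 1) = Matrix.diagonal l - 1 := by
    rw [← Matrix.diagonal_one, Matrix.diagonal_sub]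
  rw [this, Matrix.mul_sub, Matrix.sub_mul, Matrix.mul_one, hQ]

lemma polar_bound {F : Matrix (Fin 3) (Fin 3) ℝ} (hF : 0 < F.det) :
    distSqSO3 F ≤ frobSq (F.transpose * F - 1) := by
  obtain ⟨Q, l, hQ, hQ', hl, hH⟩ := spectral3 hF
  set Si := Q * Matrix.diagonal (fun i => (Real.sqrt (l i))⁻¹) * Q.transpose with hSi
  set S := Q * Matrix.diagonal (fun i => Real.sqrt (l i)) * Q.transpose with hS
  have hs : ∀ i, 0 < Real.sqrt (l i) := fun i => Real.sqrt_pos.2 (hl i)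
  have hone : Q * Matrix.diagonal (fun _ : Fin 3 => (1:ℝ)) * Q.transpose = 1 := by
    rw [Matrix.diagonal_one, Matrix.mul_one, hQ']
  have h1 : Si * S = 1 := by
    rw [hSi, hS, conj_diag_mul hQ, ← hone]
    congr 3
    funext i
    exact inv_mul_cancel₀ (hs i).ne'
  have hSiT : Si.transpose = Si := by
    rw [hSi]; simp [Matrix.transpose_mul, Matrix.mul_assoc]
  have hRR : (F * Si).transpose * (F * Si) = 1 := by
    rw [Matrix.transpose_mul, hSiT, Matrix.mul_assoc, ← Matrix.mul_assoc F.transpose, hH, hSi,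
      conj_diag_mul hQ, conj_diag_mul hQ, ← hone]
    congr 3
    funext i
    have := Real.mul_self_sqrt (hl i).le
    have h := (hs i).ne'
    field_simp
    rw [sq, this]
  have hdS : 0 < Si.det := by
    have hq : Q.det * Q.det = 1 := by
      have := congrArg Matrix.det hQ
      rwa [Matrix.det_mul, Matrix.det_transpose, Matrix.det_one] at this
    rw [hSi, Matrix.det_mul, Matrix.det_mul, Matrix.det_transpose, Matrix.det_diagonal]
    have : 0 < ∏ i, (Real.sqrt (l i))⁻¹ := Finset.prod_pos fun i _ => inv_pos.2 (hs i)
    calc (0:ℝ) < ∏ i, (Real.sqrt (l i))⁻¹ := this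
      _ = _ := by linear_combination (- ∏ i, (Real.sqrt (l i))⁻¹) * hq
  have hdet : (F * Si).det = 1 := by
    have h := congrArg Matrix.det hRR
    rw [Matrix.det_mul, Matrix.det_transpose, Matrix.det_one] at h
    have hp : 0 < (F * Si).det := by rw [Matrix.det_mul]; positivity
    nlinarith
  have hdiff : F - F * Si = F * Si * (S - 1) := by
    rw [Matrix.mul_sub, Matrix.mul_assoc, h1, Matrix.mul_one, Matrix.mul_one]
  refine (distSq_le (R := F * Si) ⟨hRR, hdet⟩).trans ?_
  rw [hdiff, frobSq_mul_left hRR, hH, hS, conj_diag_sub_one hQ', conj_diag_sub_one hQ',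
    frobSq_conj hQ, frobSq_conj hQ]
  refine Finset.sum_le_sum fun i _ => ?_
  have e := Real.mul_self_sqrt (hl i).le
  have hp := hs i
  set r := Real.sqrt (l i)
  rw [← e]
  have : (r * r - 1)^2 = (r-1)^2 * (r+1)^2 := by ring
  rw [this]
  exact le_mul_of_one_le_right (sq_nonneg _) (by nlinarith)

lemma frobSq_mul_le (X Y : Matrix (Fin 3) (Fin 3) ℝ) : frobSq (X * Y) ≤ frobSq X * frobSq Y := by
  have h : ∀ i j, ((X * Y) i j)^2 ≤ (∑ k, X i k ^ 2) * (∑ k, Y k j ^ 2) := by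
    intro i j
    rw [Matrix.mul_apply]
    exact Finset.sum_mul_sq_le_sq_mul_sq _ _ _
  unfold frobSq
  calc ∑ i, ∑ j, ((X * Y) i j)^2 ≤ ∑ i, ∑ j, (∑ k, X i k ^ 2) * (∑ k, Y k j ^ 2) :=
        Finset.sum_le_sum fun i _ => Finset.sum_le_sum fun j _ => h i j
    _ = _ := by
        simp only [Fin.sum_univ_three]; ring

lemma frobSq_nonneg (X : Matrix (Fin 3) (Fin 3) ℝ) : 0 ≤ frobSq X := by
  unfold frobSq; positivity

lemma one_mem_SO3 : (1 : Matrix (Fin 3) (Fin 3) ℝ) ∈ SO3 := by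
  constructor <;> simp

lemma crude_bound (F : Matrix (Fin 3) (Fin 3) ℝ) : distSqSO3 F ≤ 2 * frobSq F + 6 := by
  refine (distSq_le one_mem_SO3).trans ?_
  have e : ∀ i j : Fin 3, i ≠ j → (1 : Matrix (Fin 3) (Fin 3) ℝ) i j = 0 := fun i j h => Matrix.one_apply_ne h
  simp only [frobSq, Fin.sum_univ_three, Matrix.sub_apply, Matrix.one_apply_eq,
    e 0 1 (by decide), e 0 2 (by decide), e 1 0 (by decide), e 1 2 (by decide),
    e 2 0 (by decide), e 2 1 (by decide)]
  nlinarith [sq_nonneg (F 0 0 + 1), sq_nonneg (F 1 1 + 1), sq_nonneg (F 2 2 + 1),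
    sq_nonneg (F 0 1), sq_nonneg (F 0 2), sq_nonneg (F 1 0), sq_nonneg (F 1 2), sq_nonneg (F 2 0), sq_nonneg (F 2 1)]

lemma vip_sub_comm (V W : Fin 3 → ℝ) : vip (V - W) (V - W) = vip (W - V) (W - V) := by
  simp only [vip, Pi.sub_apply]; ring

lemma colMat_det (q : Fin 6 → Fin 3 → ℝ) (i j k l : Fin 6) :
    (colMat q (i, j, k, l)).det = det3 (q j - q i) (q k - q i) (q l - q i) := by
  rw [Matrix.det_fin_three]
  simp [colMat, det3]
  ring

lemma gram_apply (q : Fin 6 → Fin 3 → ℝ) (i j k l : Fin 6) (m n : Fin 3) :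
    ((colMat q (i, j, k, l)).transpose * colMat q (i, j, k, l)) m n =
      vip (![q j - q i, q k - q i, q l - q i] m) (![q j - q i, q k - q i, q l - q i] n) := by
  simp [Matrix.mul_apply, Fin.sum_univ_three, colMat, vip]

lemma vip_polar (V W X : Fin 3 → ℝ) : vip (V - X) (W - X) =
    (vip (V - X) (V - X) + vip (W - X) (W - X) - vip (V - W) (V - W)) / 2 := by
  simp only [vip, Pi.sub_apply]; ring

lemma tet_small (u : Fin 6 → Fin 3 → ℝ) (i j k l : Fin 6) (κ : ℝ) (hdet : 0 < detGrad u (i, j, k, l))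
    (H : ∀ v w, (v = i ∨ v = j ∨ v = k ∨ v = l) → (w = i ∨ w = j ∨ w = k ∨ w = l) →
      |vip (u v - u w) (u v - u w) - vip (octP v - octP w) (octP v - octP w)| ≤ κ) :
    distSqSO3 (gradMat u (i, j, k, l)) ≤
      frobSq ((colMat octP (i, j, k, l))⁻¹) ^ 2 * (81 / 4 * κ ^ 2) := by
  set U := colMat u (i, j, k, l) with hU
  set M := colMat octP (i, j, k, l) with hM
  have hM0 : M.det ≠ 0 := by
    intro h
    rw [detGrad, ← hM, h, div_zero] at hdet
    exact lt_irrefl _ hdet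
  have hMu : IsUnit M.det := isUnit_iff_ne_zero.2 hM0
  have hMM : M * M⁻¹ = 1 := Matrix.mul_nonsing_inv M hMu
  have hF : gradMat u (i, j, k, l) = U * M⁻¹ := rfl
  have hFd : 0 < (U * M⁻¹).det := by
    rw [Matrix.det_mul, Matrix.det_nonsing_inv, Ring.inverse_eq_inv']
    exact hdet
  rw [hF]
  refine (polar_bound hFd).trans ?_
  have hG : (U * M⁻¹).transpose * (U * M⁻¹) - 1 =
      M⁻¹.transpose * ((U.transpose * U - M.transpose * M) * M⁻¹) := by
    have h1 : M⁻¹.transpose * (M.transpose * M * M⁻¹) = 1 := by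
      rw [Matrix.mul_assoc, hMM, Matrix.mul_one, ← Matrix.transpose_mul, hMM, Matrix.transpose_one]
    rw [Matrix.sub_mul, Matrix.mul_sub, h1, Matrix.transpose_mul]
    simp only [Matrix.mul_assoc]
  rw [hG]
  refine (frobSq_mul_le _ _).trans ?_
  rw [frobSq_transpose]
  have hent : ∀ m n, ((U.transpose * U - M.transpose * M) m n) ^ 2 ≤ 9 / 4 * κ ^ 2 := by
    intro m n
    rw [Matrix.sub_apply, hU, hM, gram_apply, gram_apply]
    have gen : ∀ v w, (v = i ∨ v = j ∨ v = k ∨ v = l) → (w = i ∨ w = j ∨ w = k ∨ w = l) →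
        (vip (u v - u i) (u w - u i) - vip (octP v - octP i) (octP w - octP i)) ^ 2
          ≤ 9 / 4 * κ ^ 2 := by
      intro v w hv hw
      have a1 := abs_le.1 (H v i hv (Or.inl rfl))
      have a2 := abs_le.1 (H w i hw (Or.inl rfl))
      have a3 := abs_le.1 (H v w hv hw)
      rw [vip_polar (u v) (u w), vip_polar (octP v) (octP w)]
      have : (9 / 4 * κ ^ 2) = (3 / 2 * κ) ^ 2 := by ring
      rw [this]
      apply sq_le_sq'
      · linarith
      · linarith
    fin_cases m <;> fin_cases n
    · exact gen j j (by tauto) (by tauto)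
    · exact gen j k (by tauto) (by tauto)
    · exact gen j l (by tauto) (by tauto)
    · exact gen k j (by tauto) (by tauto)
    · exact gen k k (by tauto) (by tauto)
    · exact gen k l (by tauto) (by tauto)
    · exact gen l j (by tauto) (by tauto)
    · exact gen l k (by tauto) (by tauto)
    · exact gen l l (by tauto) (by tauto)
  have hGf : frobSq (U.transpose * U - M.transpose * M) ≤ 81 / 4 * κ ^ 2 := by
    unfold frobSq
    simp only [Fin.sum_univ_three]
    linarith [hent 0 0, hent 0 1, hent 0 2, hent 1 0, hent 1 1, hent 1 2, hent 2 0, hent 2 1, hent 2 2]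
  have h2 := frobSq_mul_le (U.transpose * U - M.transpose * M) M⁻¹
  have hn := frobSq_nonneg M⁻¹
  have h3 := mul_le_mul_of_nonneg_right hGf hn
  have h4 := mul_le_mul_of_nonneg_left (h2.trans h3) hn
  refine h4.trans (le_of_eq ?_)
  ring

lemma tet_large (u : Fin 6 → Fin 3 → ℝ) (i j k l : Fin 6) (L : ℝ)
    (hj : vip (u j - u i) (u j - u i) ≤ L) (hk : vip (u k - u i) (u k - u i) ≤ L)
    (hl : vip (u l - u i) (u l - u i) ≤ L) :
    distSqSO3 (gradMat u (i, j, k, l)) ≤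
      2 * (3 * L * frobSq ((colMat octP (i, j, k, l))⁻¹)) + 6 := by
  refine (crude_bound _).trans ?_
  have hU : frobSq (colMat u (i, j, k, l)) = vip (u j - u i) (u j - u i) +
      vip (u k - u i) (u k - u i) + vip (u l - u i) (u l - u i) := by
    simp [frobSq, colMat, vip, Fin.sum_univ_three]
    ring
  have h1 := frobSq_mul_le (colMat u (i, j, k, l)) (colMat octP (i, j, k, l))⁻¹
  have h2 := mul_le_mul_of_nonneg_right (show frobSq (colMat u (i, j, k, l)) ≤ 3 * L by linarith)
    (frobSq_nonneg (colMat octP (i, j, k, l))⁻¹)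
  have : gradMat u (i, j, k, l) = colMat u (i, j, k, l) * (colMat octP (i, j, k, l))⁻¹ := rfl
  rw [this]
  linarith

lemma edge_sq {v : Fin 3 → ℝ} {S : ℝ} (h : (enorm3 v - 1) ^ 2 ≤ S) :
    vip v v ≤ 2 + 2 * S ∧ (S ≤ 1 → |vip v v - 1| ≤ 3 * Real.sqrt S) := by
  have e : vip v v = enorm3 v ^ 2 := by
    rw [enorm3, Real.sq_sqrt (by positivity)]
    simp [vip, Fin.sum_univ_three]; ring
  have h0 : 0 ≤ enorm3 v := Real.sqrt_nonneg _
  rw [e]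
  set r := enorm3 v
  refine ⟨by nlinarith [sq_nonneg (r - 2)], fun hS => ?_⟩
  have hd := Real.abs_le_sqrt h
  have hS1 : Real.sqrt S ≤ 1 := Real.sqrt_le_one.mpr hS
  have hS0 := Real.sqrt_nonneg S
  have : r ^ 2 - 1 = (r - 1) * (r + 1) := by ring
  rw [this, abs_mul]
  have h2 : |r + 1| ≤ 3 := by
    rw [abs_le]; rw [abs_le] at hd; constructor <;> linarith
  calc |r - 1| * |r + 1| ≤ Real.sqrt S * 3 := mul_le_mul hd h2 (abs_nonneg _) hS0
    _ = _ := by ring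

lemma diag_bound (u : Fin 6 → Fin 3 → ℝ) (hdet : ∀ t ∈ tets1, 0 < detGrad u t)
    (hconv : Convex ℝ (octImage u)) {η : ℝ} (hη : 0 ≤ η) (hη' : η ≤ 1/100)
    (hE : ∀ e ∈ octEdges, |vip (u e.1 - u e.2) (u e.1 - u e.2) - 1| ≤ η) :
    |vip (u 0 - u 3) (u 0 - u 3) - 2| ≤ 186 * η := by
  have s2 : 0 < Real.sqrt 2 := by positivity
  have o1 : 0 < det3 (u 1 - u 0) (u 3 - u 0) (u 4 - u 0) := by
    have := hdet (0, 1, 3, 4) (by simp [tets1])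
    rw [detGrad, colMat_det, colMat_det] at this
    have e : det3 (octP 1 - octP 0) (octP 3 - octP 0) (octP 4 - octP 0) = Real.sqrt 2 / 2 := by
      simp [det3, octP]
    rw [e] at this
    exact (div_pos_iff_of_pos_right (by positivity)).1 this
  have o2 : det3 (u 1 - u 0) (u 3 - u 0) (u 5 - u 0) < 0 := by
    have := hdet (0, 1, 3, 5) (by simp [tets1])
    rw [detGrad, colMat_det, colMat_det] at this
    have e : det3 (octP 1 - octP 0) (octP 3 - octP 0) (octP 5 - octP 0) = -(Real.sqrt 2 / 2) := by
      simp [det3, octP]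
    rw [e, div_neg, ← neg_div] at this
    have := (div_pos_iff_of_pos_right (by positivity)).1 this
    linarith
  have o3 : det3 (u 2 - u 0) (u 3 - u 0) (u 4 - u 0) < 0 := by
    have := hdet (0, 2, 3, 4) (by simp [tets1])
    rw [detGrad, colMat_det, colMat_det] at this
    have e : det3 (octP 2 - octP 0) (octP 3 - octP 0) (octP 4 - octP 0) = -(Real.sqrt 2 / 2) := by
      simp [det3, octP]
    rw [e, div_neg, ← neg_div] at this
    have := (div_pos_iff_of_pos_right (by positivity)).1 this
    linarith
  have o4 : 0 < det3 (u 2 - u 0) (u 3 - u 0) (u 5 - u 0) := by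
    have := hdet (0, 2, 3, 5) (by simp [tets1])
    rw [detGrad, colMat_det, colMat_det] at this
    have e : det3 (octP 2 - octP 0) (octP 3 - octP 0) (octP 5 - octP 0) = Real.sqrt 2 / 2 := by
      simp [det3, octP]
    rw [e] at this
    exact (div_pos_iff_of_pos_right (by positivity)).1 this
  have hmem : ∀ i, u i ∈ octImage u := by
    have sub : ∀ t ∈ tets1, ∀ x ∈ ({u t.1, u t.2.1, u t.2.2.1, u t.2.2.2} : Set (Fin 3 → ℝ)),
        x ∈ octImage u := by
      intro t ht x hx
      exact Set.mem_iUnion₂.2 ⟨t, ht, subset_convexHull ℝ _ hx⟩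
    intro i
    fin_cases i
    · exact sub (0, 1, 3, 4) (by simp [tets1]) _ (by simp)
    · exact sub (0, 1, 3, 4) (by simp [tets1]) _ (by simp)
    · exact sub (0, 2, 3, 4) (by simp [tets1]) _ (by simp)
    · exact sub (0, 1, 3, 4) (by simp [tets1]) _ (by simp)
    · exact sub (0, 1, 3, 4) (by simp [tets1]) _ (by simp)
    · exact sub (0, 1, 3, 5) (by simp [tets1]) _ (by simp)
  have hcov : ∀ x ∈ octImage u, InT (u 0) (u 1) (u 3) (u 4) x ∨ InT (u 0) (u 1) (u 3) (u 5) x ∨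
      InT (u 0) (u 2) (u 3) (u 4) x ∨ InT (u 0) (u 2) (u 3) (u 5) x := by
    intro x hx
    obtain ⟨t, ht, hx⟩ := Set.mem_iUnion₂.1 hx
    simp only [tets1, List.mem_cons, List.not_mem_nil, or_false] at ht
    rcases ht with rfl | rfl | rfl | rfl
    · exact Or.inl (inT_of_hull hx)
    · exact Or.inr (Or.inl (inT_of_hull hx))
    · exact Or.inr (Or.inr (Or.inl (inT_of_hull hx)))
    · exact Or.inr (Or.inr (Or.inr (inT_of_hull hx)))
  have flip : ∀ {p q r s x : Fin 3 → ℝ}, InT p q r s x → InT r s p q x := by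
    rintro p q r s x ⟨k, l, m, n, hk, hl, hm, hn, hs, h⟩
    exact ⟨m, n, k, l, hm, hn, hk, hl, by linarith, fun i => by rw [h i]; ring⟩
  have hcov' : ∀ x ∈ octImage u, InT (u 3) (u 4) (u 0) (u 1) x ∨ InT (u 3) (u 4) (u 0) (u 2) x ∨
      InT (u 3) (u 5) (u 0) (u 1) x ∨ InT (u 3) (u 5) (u 0) (u 2) x := by
    intro x hx
    rcases hcov x hx with h | h | h | h
    · exact Or.inl (flip h)
    · exact Or.inr (Or.inr (Or.inl (flip h)))
    · exact Or.inr (Or.inl (flip h))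
    · exact Or.inr (Or.inr (Or.inr (flip h)))
  have dsw : ∀ p q r s : Fin 3 → ℝ, det3 (s - r) (p - r) (q - r) = det3 (q - p) (r - p) (s - p) := by
    intro p q r s; simp only [det3, Pi.sub_apply]; ring
  obtain ⟨α, δ, β, γ, x1, x2, x3, x4, x5, x6⟩ := crossing hconv (hmem 1) (hmem 2) (hmem 4) hcov o1 o2 o3 o4
  obtain ⟨α', δ', β', γ', y1, y2, y3, y4, y5, y6⟩ := crossing hconv (hmem 4) (hmem 5) (hmem 1) hcov'
    (by rw [dsw]; exact o1) (by rw [dsw]; exact o3) (by rw [dsw]; exact o2) (by rw [dsw]; exact o4)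
  have e01 := hE (0, 1) (by simp [octEdges])
  have e02 := hE (0, 2) (by simp [octEdges])
  have e04 := hE (0, 4) (by simp [octEdges])
  have e05 := hE (0, 5) (by simp [octEdges])
  have e13 := hE (1, 3) (by simp [octEdges])
  have e14 := hE (1, 4) (by simp [octEdges])
  have e15 := hE (1, 5) (by simp [octEdges])
  have e23 := hE (2, 3) (by simp [octEdges])
  have e24 := hE (2, 4) (by simp [octEdges])
  have e25 := hE (2, 5) (by simp [octEdges])
  have e34 := hE (3, 4) (by simp [octEdges])
  have e35 := hE (3, 5) (by simp [octEdges])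
  simp only at e01 e02 e04 e05 e13 e14 e15 e23 e24 e25 e34 e35
  have f01 := e01
  have f02 := e02
  have f04 := e04
  have f05 := e05
  have f13 := e13
  have f14 := e14
  have f15 := e15
  have f34 := e34
  have f35 := e35
  rw [vip_sub_comm] at f01 f02 f04 f05 f13 f14 f15 f34 f35
  have P1 := pq_bound (u 0 - u 4) (u 3 - u 4) (u 1 - u 4) (u 2 - u 4) hη hη' x1 x2 x3 x4 x5 x6
    e04 e14 e24 e34
    (by rwa [sub_sub_sub_cancel_right]) (by rwa [sub_sub_sub_cancel_right])
    (by rwa [sub_sub_sub_cancel_right]) (by rwa [sub_sub_sub_cancel_right, vip_sub_comm])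
  have P2 := pq_bound (u 3 - u 1) (u 0 - u 1) (u 4 - u 1) (u 5 - u 1) hη hη' y1 y2 y3 y4 y5 y6
    f13 f14 f15 e01
    (by rwa [sub_sub_sub_cancel_right]) (by rwa [sub_sub_sub_cancel_right])
    (by rwa [sub_sub_sub_cancel_right]) (by rwa [sub_sub_sub_cancel_right])
  have P3 := qr_lower (u 1 - u 0) (u 2 - u 0) (u 4 - u 0) (u 5 - u 0) hη hη' f01 f02 f04 f05
    (by rwa [sub_sub_sub_cancel_right]) (by rwa [sub_sub_sub_cancel_right])
    (by rwa [sub_sub_sub_cancel_right]) (by rwa [sub_sub_sub_cancel_right])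
  have P4 := ring_lower (u 3 - u 0) (u 1 - u 0) (u 2 - u 0) (u 4 - u 0) (u 5 - u 0) hη hη' o1 o2 o3 o4
    f01 f02 f04 f05
    (by rwa [sub_sub_sub_cancel_right]) (by rwa [sub_sub_sub_cancel_right])
    (by rwa [sub_sub_sub_cancel_right]) (by rwa [sub_sub_sub_cancel_right])
    (by rwa [sub_sub_sub_cancel_right]) (by rwa [sub_sub_sub_cancel_right])
    (by rwa [sub_sub_sub_cancel_right]) (by rwa [sub_sub_sub_cancel_right])
  simp only [sub_sub_sub_cancel_right] at P1 P2 P3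
  rw [vip_sub_comm (u 3) (u 0)] at P2 P4
  have hx := vip_self_nonneg (u 0 - u 3)
  have P5 := p_upper hη hη' P1.1 (by linarith) P1.2.1 P2.2.1 P1.2.2 P2.2.2 P3
  rw [abs_le]
  constructor <;> linarith

lemma ref_edges : (∀ e ∈ octEdges, vip (octP e.1 - octP e.2) (octP e.1 - octP e.2) = 1) ∧
    vip (octP 0 - octP 3) (octP 0 - octP 3) = 2 := by
  have h2 : Real.sqrt 2 * Real.sqrt 2 = 2 := Real.mul_self_sqrt (by norm_num)
  constructor
  · intro e he
    simp only [octEdges, List.mem_cons, List.not_mem_nil, or_false] at he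
    rcases he with rfl | rfl | rfl | rfl | rfl | rfl | rfl | rfl | rfl | rfl | rfl | rfl <;>
      simp [octP, vip] <;> linarith
  · simp [octP, vip]; norm_num

lemma all_pairs {i j k l : Fin 6} (ht : (i, j, k, l) ∈ tets1) {v w : Fin 6}
    (hv : v = i ∨ v = j ∨ v = k ∨ v = l) (hw : w = i ∨ w = j ∨ w = k ∨ w = l) :
    v = w ∨ (v, w) ∈ octEdges ∨ (w, v) ∈ octEdges ∨ (v = 0 ∧ w = 3) ∨ (v = 3 ∧ w = 0) := by
  simp only [tets1, List.mem_cons, List.not_mem_nil, or_false, Prod.mk.injEq] at ht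
  rcases ht with ⟨rfl, rfl, rfl, rfl⟩ | ⟨rfl, rfl, rfl, rfl⟩ | ⟨rfl, rfl, rfl, rfl⟩ |
    ⟨rfl, rfl, rfl, rfl⟩ <;>
  rcases hv with rfl | rfl | rfl | rfl <;> rcases hw with rfl | rfl | rfl | rfl <;>
  simp [octEdges]

lemma tet_final (t : Fin 6 × Fin 6 × Fin 6 × Fin 6) (ht : t ∈ tets1) :
    ∃ C > 0, ∀ u : Fin 6 → Fin 3 → ℝ,
      (∀ t ∈ tets1, 0 < detGrad u t) →
      Convex ℝ (octImage u) →
        distSqSO3 (gradMat u t) ≤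
          C * (octEdges.map fun e => (enorm3 (u e.1 - u e.2) - 1) ^ 2).sum := by
  obtain ⟨i, j, k, l⟩ := t
  set n := frobSq ((colMat octP (i, j, k, l))⁻¹) with hn
  have hn0 : 0 ≤ n := frobSq_nonneg _
  refine ⟨n ^ 2 * (81 / 4 * 558 ^ 2) + (48 * n + 6) * 90001, by positivity, ?_⟩
  intro u hdet hconv
  set S := (octEdges.map fun e => (enorm3 (u e.1 - u e.2) - 1) ^ 2).sum with hS
  have hedge : ∀ e ∈ octEdges, (enorm3 (u e.1 - u e.2) - 1) ^ 2 ≤ S := by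
    intro e he
    apply List.single_le_sum
    · intro x hx
      obtain ⟨e, -, rfl⟩ := List.mem_map.1 hx
      positivity
    · exact List.mem_map.2 ⟨e, he, rfl⟩
  have hS0 : 0 ≤ S := (sq_nonneg _).trans (hedge (0, 1) (by simp [octEdges]))
  rcases le_or_gt S (1 / 90000) with hsm | hlg
  · set η := 3 * Real.sqrt S with hη
    have hη0 : 0 ≤ η := by positivity
    have hη1 : η ≤ 1 / 100 := by
      have : Real.sqrt S ≤ 1 / 300 := by
        rw [Real.sqrt_le_left (by norm_num)]; linarith
      linarith
    have hE : ∀ e ∈ octEdges, |vip (u e.1 - u e.2) (u e.1 - u e.2) - 1| ≤ η :=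
      fun e he => (edge_sq (hedge e he)).2 (by linarith)
    have hD := diag_bound u hdet hconv hη0 hη1 hE
    have H := tet_small u i j k l (186 * η) (hdet _ ht) (by
      intro v w hv hw
      rcases all_pairs ht hv hw with rfl | h | h | ⟨rfl, rfl⟩ | ⟨rfl, rfl⟩
      · simp [vip]; linarith
      · have h1 := hE _ h
        have h2 := ref_edges.1 _ h
        simp only at h1 h2
        rw [h2]; linarith
      · have h1 := hE _ h
        have h2 := ref_edges.1 _ h
        simp only at h1 h2
        rw [vip_sub_comm (octP v), h2, vip_sub_comm (u v)]; linarith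
      · rw [ref_edges.2]; exact hD
      · rw [vip_sub_comm (octP 3), vip_sub_comm (u 3), ref_edges.2]; exact hD)
    refine H.trans ?_
    have e : (186 * η) ^ 2 = 558 ^ 2 * S := by
      rw [hη]
      have := Real.sq_sqrt hS0
      linear_combination 558 ^ 2 * this
    rw [← hn, e]
    have : 0 ≤ (48 * n + 6) * 90001 * S := by positivity
    linarith
  · have hL : ∀ v w, (v = i ∨ v = j ∨ v = k ∨ v = l) → (w = i ∨ w = j ∨ w = k ∨ w = l) →
        vip (u v - u w) (u v - u w) ≤ 8 + 8 * S := by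
      have h03 : vip (u 0 - u 3) (u 0 - u 3) ≤ 8 + 8 * S := by
        have a1 := (edge_sq (hedge (0, 1) (by simp [octEdges]))).1
        have a2 := (edge_sq (hedge (1, 3) (by simp [octEdges]))).1
        simp only [vip, Pi.sub_apply] at a1 a2 ⊢
        nlinarith [sq_nonneg (u 0 0 + u 3 0 - 2 * u 1 0), sq_nonneg (u 0 1 + u 3 1 - 2 * u 1 1),
          sq_nonneg (u 0 2 + u 3 2 - 2 * u 1 2)]
      intro v w hv hw
      rcases all_pairs ht hv hw with rfl | h | h | ⟨rfl, rfl⟩ | ⟨rfl, rfl⟩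
      · simp [vip]; linarith
      · have := (edge_sq (hedge _ h)).1
        simp only at this
        linarith
      · have := (edge_sq (hedge _ h)).1
        simp only at this
        rw [vip_sub_comm]
        linarith
      · exact h03
      · rw [vip_sub_comm]; exact h03
    have H := tet_large u i j k l (8 + 8 * S) (hL _ _ (by tauto) (by tauto)) (hL _ _ (by tauto) (by tauto))
      (hL _ _ (by tauto) (by tauto))
    refine H.trans ?_
    rw [← hn]
    have h1 : 1 + S ≤ 90001 * S := by linarith
    have h2 := mul_le_mul_of_nonneg_left h1 (by positivity : 0 ≤ 48 * n + 6)
    have h3 : 0 ≤ n ^ 2 * (81 / 4 * 558 ^ 2) * S := by positivity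
    linarith


theorem octahedron_rigidity :
    ∃ C > 0, ∀ u : Fin 6 → Fin 3 → ℝ,
      (∀ t ∈ tets1, 0 < detGrad u t) →
      Convex ℝ (octImage u) →
      ∀ t ∈ tets1,
        distSqSO3 (gradMat u t) ≤
          C * (octEdges.map fun e => (enorm3 (u e.1 - u e.2) - 1) ^ 2).sum := by
  have key : ∀ l : List (Fin 6 × Fin 6 × Fin 6 × Fin 6), (∀ t ∈ l, t ∈ tets1) →
      ∃ C > 0, ∀ u : Fin 6 → Fin 3 → ℝ,
      (∀ t ∈ tets1, 0 < detGrad u t) →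
      Convex ℝ (octImage u) →
      ∀ t ∈ l,
        distSqSO3 (gradMat u t) ≤
          C * (octEdges.map fun e => (enorm3 (u e.1 - u e.2) - 1) ^ 2).sum := by
    intro l
    induction l with
    | nil => exact fun _ => ⟨1, one_pos, fun u _ _ t ht => by simp at ht⟩
    | cons a l ih =>
      intro hl
      obtain ⟨C1, h1, H1⟩ := ih fun t ht => hl t (List.mem_cons_of_mem _ ht)
      obtain ⟨C2, h2, H2⟩ := tet_final a (hl a List.mem_cons_self)
      refine ⟨C1 + C2, by positivity, fun u hd hc t ht => ?_⟩
      have hS : 0 ≤ (octEdges.map fun e => (enorm3 (u e.1 - u e.2) - 1) ^ 2).sum := by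
        apply List.sum_nonneg
        intro x hx
        obtain ⟨e, -, rfl⟩ := List.mem_map.1 hx
        positivity
      have g1 := mul_nonneg h1.le hS
      have g2 := mul_nonneg h2.le hS
      rcases List.mem_cons.1 ht with rfl | ht
      · have := H2 u hd hc
        linarith
      · have := H1 u hd hc t ht
        linarith
  exact key tets1 fun _ h => h

end
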